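/- Under assumptions (A1)–(A4) on the triangular array, for every integer m with ℓ ≤ m ≤ n and every t ≥ 0, |ψ(t) − ψ_n(t)| ≤ e^{2μ} ( C2 n^{−1} + 3 C1 α(m) + 8 C1² m / n ) t, where ψ(t) = exp(μ(φ(t) − 1)) and ψ_n(t) = E[e^{itS_n}]. -/

import Mathlib

/-!
The proof is a backward Lindeberg telescoping over the tail sums `T_k = Y_{n,k} + ⋯ + Y_{n,n}`.
With `f_k = E e^{itT_k}` and `φ_k` the characteristic function of `Y_{n,k}`,
`f_k - f_{k+1} = E[(e^{itY_{n,k}} - 1) e^{itT_{k+1}}]`. Three replacements turn the right-hand side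
into `(φ_k - 1) f_{k+1}` (`norm_charFn_tailSum_step`):

* `T_{k+1}` becomes `T_{k+m}`, at cost `2t m (C1/n)²`, since the two differ only where some
  `Y_{n,i}` with `k < i < k + m` is nonzero;
* `e^{itT_{k+m}}` is replaced by its mean, at cost `2t (C1/n) α(m)`, by the mixing assumption on
  the future given `ℱ k` (`norm_cov_cexp_le`);
* `f_{k+m}` becomes `f_{k+1}`, at cost `2t m (C1/n)²`.

Moreover `|φ_k - exp (φ_k - 1)| ≤ |φ_k - 1|² ≤ (t C1/n)(2 C1/n)`, so
`f_k = exp (φ_k - 1) f_{k+1}` up to `O(t/n²) + 2t (C1/n) α(m)`. As `|exp (φ_k - 1)| ≤ 1`, the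
errors add up (`norm_sub_prod_le`) and `f_1 = ψ_n` is compared with `exp (∑ (φ_k - 1))`.

Integrating the bound on `φ_k' - μ φ' / n` from `0` to `t` gives
`|∑ (φ_k - 1) - μ (φ - 1)| ≤ C2 t / n`, and `exp` is 1-Lipschitz on the closed left half-plane.
The total `C2/n + 2 C1 α(m) + (4m + 2) C1²/n`, times `t`, is within the claimed bound even without
the factor `e^{2μ} ≥ 1`.
-/

open MeasureTheory ProbabilityTheory Filter Set

/-- The characteristic function of a real random variable `X` under the measure `P`. -/
noncomputable def charFn {Ω : Type*} [MeasurableSpace Ω] (P : Measure Ω) (X : Ω → ℝ) (t : ℝ) : ℂ :=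
  ∫ ω, Complex.exp (Complex.I * t * X ω) ∂P

/-! ### Characteristic functions -/

lemma norm_cexp_I (t x : ℝ) : ‖Complex.exp (Complex.I * t * x)‖ = 1 := by
  have h : Complex.I * t * x = ((t * x : ℝ) : ℂ) * Complex.I := by push_cast; ring
  rw [h, Complex.norm_exp_ofReal_mul_I]

lemma norm_cexp_I_sub_one_le (t x : ℝ) (ht : 0 ≤ t) :
    ‖Complex.exp (Complex.I * t * x) - 1‖ ≤ t * |x| := by
  have h := Real.norm_exp_I_mul_ofReal_sub_one_le (x := t * x)
  rw [Real.norm_eq_abs, abs_mul, abs_of_nonneg ht] at h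
  refine le_trans (le_of_eq ?_) h
  push_cast; ring_nf

lemma integrable_cexp_I {Ω : Type*} {mΩ : MeasurableSpace Ω} (P : Measure Ω)
    [IsProbabilityMeasure P] {X : Ω → ℝ} (hX : AEMeasurable X P) (t : ℝ) :
    Integrable (fun ω => Complex.exp (Complex.I * t * X ω)) P := by
  refine Integrable.of_bound (C := 1) ?_ (ae_of_all _ fun ω => (norm_cexp_I t (X ω)).le)
  exact AEMeasurable.aestronglyMeasurable (by fun_prop)

lemma norm_charFn_le_one {Ω : Type*} {mΩ : MeasurableSpace Ω} (P : Measure Ω)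
    [IsProbabilityMeasure P] (X : Ω → ℝ) (t : ℝ) : ‖charFn P X t‖ ≤ 1 := by
  have h := norm_integral_le_of_norm_le_const (μ := P)
    (ae_of_all _ fun ω => (norm_cexp_I t (X ω)).le)
  simpa [charFn] using h

lemma charFn_sub_one {Ω : Type*} {mΩ : MeasurableSpace Ω} (P : Measure Ω)
    [IsProbabilityMeasure P] {X : Ω → ℝ} (hX : AEMeasurable X P) (t : ℝ) :
    charFn P X t - 1 = ∫ ω, (Complex.exp (Complex.I * t * X ω) - 1) ∂P := by
  rw [integral_sub (integrable_cexp_I P hX t) (integrable_const _)]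
  simp [charFn]

lemma integral_norm_cexp_I_sub_one_le {Ω : Type*} {mΩ : MeasurableSpace Ω} (P : Measure Ω)
    [IsProbabilityMeasure P] {X : Ω → ℝ} (hX : Integrable X P) (t : ℝ) (ht : 0 ≤ t) :
    ∫ ω, ‖Complex.exp (Complex.I * t * X ω) - 1‖ ∂P ≤ t * ∫ ω, |X ω| ∂P := by
  rw [← integral_const_mul]
  exact integral_mono ((integrable_cexp_I P hX.aemeasurable t).sub (integrable_const _)).norm
    (hX.abs.const_mul t) fun ω => norm_cexp_I_sub_one_le t (X ω) ht

lemma norm_charFn_sub_one_le {Ω : Type*} {mΩ : MeasurableSpace Ω} (P : Measure Ω)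
    [IsProbabilityMeasure P] {X : Ω → ℝ} (hX : Integrable X P) (t : ℝ) (ht : 0 ≤ t) :
    ‖charFn P X t - 1‖ ≤ t * ∫ ω, |X ω| ∂P := by
  rw [charFn_sub_one P hX.aemeasurable]
  exact (norm_integral_le_integral_norm _).trans (integral_norm_cexp_I_sub_one_le P hX t ht)

/-- Dropping a finite block of summands changes `e^{it∑}` only where some dropped summand is
nonzero, and then by at most `2`. -/
lemma norm_cexp_block_le {ι : Type*} (s : Finset ι) (x : ι → ℝ) (y t : ℝ) :
    ‖Complex.exp (Complex.I * t * (∑ i ∈ s, x i + y : ℝ)) - Complex.exp (Complex.I * t * y)‖ ≤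
      2 * ∑ i ∈ s, Set.indicator {z : ℝ | z ≠ 0} 1 (x i) := by
  have hnn : ∀ i ∈ s, (0 : ℝ) ≤ Set.indicator {z : ℝ | z ≠ 0} 1 (x i) := fun i _ =>
    Set.indicator_nonneg (fun _ _ => zero_le_one) _
  by_cases h : ∀ i ∈ s, x i = 0
  · rw [Finset.sum_eq_zero h]
    simpa using Finset.sum_nonneg hnn
  · push Not at h
    obtain ⟨i, hi, hne⟩ := h
    have h1 : (1 : ℝ) ≤ ∑ i ∈ s, Set.indicator {z : ℝ | z ≠ 0} 1 (x i) := by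
      refine le_trans ?_ (Finset.single_le_sum hnn hi)
      simp [hne]
    have h2 := norm_sub_le (Complex.exp (Complex.I * t * (∑ i ∈ s, x i + y : ℝ)))
      (Complex.exp (Complex.I * t * y))
    rw [norm_cexp_I, norm_cexp_I] at h2
    linarith

lemma norm_charFn_sub_one_le_measure {Ω : Type*} {mΩ : MeasurableSpace Ω} (P : Measure Ω)
    [IsProbabilityMeasure P] {X : Ω → ℝ} (hX : Measurable X) (t : ℝ) :
    ‖charFn P X t - 1‖ ≤ 2 * P.real {ω | X ω ≠ 0} := by
  have hms : MeasurableSet {ω | X ω ≠ 0} := (measurableSet_eq_fun hX measurable_const).compl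
  rw [charFn_sub_one P hX.aemeasurable, ← integral_indicator_one hms, ← integral_const_mul]
  refine norm_integral_le_of_norm_le
    (((integrable_const (1 : ℝ)).indicator hms).const_mul 2) (ae_of_all _ fun ω => ?_)
  simpa [Set.indicator_apply] using norm_cexp_block_le {()} (fun _ => X ω) 0 t

lemma differentiable_charFn {Ω : Type*} {mΩ : MeasurableSpace Ω} (P : Measure Ω)
    [IsProbabilityMeasure P] {X : Ω → ℝ} (hX : Integrable X P) : Differentiable ℝ (charFn P X) := by
  intro t
  have hm := hX.aemeasurable
  refine (hasDerivAt_integral_of_dominated_loc_of_deriv_le (μ := P) (s := Set.univ)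
    (F := fun (s : ℝ) ω => Complex.exp (Complex.I * s * X ω))
    (F' := fun (s : ℝ) ω => Complex.exp (Complex.I * s * X ω) * (Complex.I * X ω))
    (bound := fun ω => |X ω|) Filter.univ_mem
    (Eventually.of_forall fun s => (integrable_cexp_I P hm s).aestronglyMeasurable)
    (integrable_cexp_I P hm t) (AEMeasurable.aestronglyMeasurable (by fun_prop))
    (ae_of_all _ fun ω s _ => ?_) hX.abs (ae_of_all _ fun ω s _ => ?_)).2.differentiableAt
  · simp [norm_cexp_I]
  · have h : HasDerivAt (fun s : ℝ => Complex.I * (s : ℂ) * X ω) (Complex.I * X ω) s := by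
      simpa using ((Complex.ofRealCLM.hasDerivAt (x := s)).const_mul Complex.I).mul_const
        (X ω : ℂ)
    exact h.cexp

/-! ### The exponential on the left half-plane, and products -/

lemma norm_cexp_le_one_of_re {z : ℂ} (hz : z.re ≤ 0) : ‖Complex.exp z‖ ≤ 1 := by
  rw [Complex.norm_exp]; exact Real.exp_le_one_iff.2 hz

lemma norm_cexp_sub_cexp_le {z w : ℂ} (hz : z.re ≤ 0) (hw : w.re ≤ 0) :
    ‖Complex.exp z - Complex.exp w‖ ≤ ‖z - w‖ := by
  have h := (convex_halfSpace_re_le 0).norm_image_sub_le_of_norm_hasDerivWithin_le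
    (f := Complex.exp) (f' := Complex.exp) (C := 1)
    (fun x _ => (Complex.hasDerivAt_exp x).hasDerivWithinAt)
    (fun x hx => norm_cexp_le_one_of_re hx) (x := w) (y := z) hw hz
  simpa using h

lemma norm_cexp_sub_one_sub_le {z : ℂ} (hz : z.re ≤ 0) :
    ‖Complex.exp z - (1 + z)‖ ≤ ‖z‖ ^ 2 := by
  have h := ((convex_halfSpace_re_le 0).inter
      (convex_closedBall (0 : ℂ) ‖z‖)).norm_image_sub_le_of_norm_hasDerivWithin_le
    (f := fun x => Complex.exp x - x) (f' := fun x => Complex.exp x - 1) (C := ‖z‖)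
    (fun x _ => ((Complex.hasDerivAt_exp x).sub (hasDerivAt_id x)).hasDerivWithinAt)
    (fun x hx => ?_) (x := 0) (y := z) ⟨by simp, by simp⟩ ⟨hz, by simp⟩
  · simp only [Complex.exp_zero, sub_zero] at h
    rw [sq]
    refine le_trans (le_of_eq ?_) h
    congr 1; ring
  · have h1 := norm_cexp_sub_cexp_le (z := x) (w := 0) hx.1 (by simp)
    have h2 : ‖x‖ ≤ ‖z‖ := by simpa using hx.2
    simpa using h1.trans (by simpa using h2)

/-- An approximate backward recursion `f k ≈ q k * f (k + 1)` with contracting multipliers `q k`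
accumulates its errors additively. -/
lemma norm_sub_prod_le (f q : ℕ → ℂ) (ε : ℝ) (n : ℕ) (hq : ∀ k ∈ Finset.Icc 1 n, ‖q k‖ ≤ 1)
    (hf : ∀ k ∈ Finset.Icc 1 n, ‖f k - q k * f (k + 1)‖ ≤ ε) :
    ‖f 1 - (∏ k ∈ Finset.Icc 1 n, q k) * f (n + 1)‖ ≤ n * ε := by
  induction n with
  | zero => simp
  | succ N ih =>
    have hsub : ∀ k ∈ Finset.Icc 1 N, k ∈ Finset.Icc 1 (N + 1) := fun k hk => by
      simp only [Finset.mem_Icc] at hk ⊢; omega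
    have h1 := ih (fun k hk => hq k (hsub k hk)) (fun k hk => hf k (hsub k hk))
    have h2 := hf (N + 1) (by simp)
    have h3 : ‖∏ k ∈ Finset.Icc 1 N, q k‖ ≤ 1 := by
      rw [norm_prod]
      exact Finset.prod_le_one (fun _ _ => norm_nonneg _) fun k hk => hq k (hsub k hk)
    rw [Finset.prod_Icc_succ_top (by omega)]
    have h4 : f 1 - (∏ k ∈ Finset.Icc 1 N, q k) * q (N + 1) * f (N + 1 + 1) =
        (f 1 - (∏ k ∈ Finset.Icc 1 N, q k) * f (N + 1)) +
        (∏ k ∈ Finset.Icc 1 N, q k) * (f (N + 1) - q (N + 1) * f (N + 1 + 1)) := by ring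
    rw [h4]
    refine (norm_add_le _ _).trans ?_
    rw [norm_mul]
    have h5 := mul_le_mul h3 h2 (norm_nonneg _) zero_le_one
    push_cast
    linarith

/-! ### Decorrelation from conditional expectations -/

/-- If the conditional expectation of a bounded real `w` given `m` is within `a` of its mean, then
`w` decorrelates from every integrable `m`-measurable `h` at the cost `a * E‖h‖`. -/
lemma norm_cov_le {Ω : Type*} {m mΩ : MeasurableSpace Ω} (hm : m ≤ mΩ) (P : Measure Ω)
    [IsProbabilityMeasure P] {h : Ω → ℂ} {w : Ω → ℝ} (hh : StronglyMeasurable[m] h)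
    (hhi : Integrable h P) (hw : Measurable w) (hw1 : ∀ ω, |w ω| ≤ 1) (a : ℝ)
    (hc : ∀ᵐ ω ∂P, |(P[w | m]) ω - ∫ x, w x ∂P| ≤ a) :
    ‖∫ ω, h ω * (w ω : ℂ) ∂P - (∫ ω, h ω ∂P) * ((∫ ω, w ω ∂P : ℝ) : ℂ)‖ ≤
      a * ∫ ω, ‖h ω‖ ∂P := by
  have hwi : Integrable w P :=
    Integrable.of_bound hw.aestronglyMeasurable 1 (ae_of_all _ hw1)
  have hhw : Integrable (fun ω => w ω • h ω) P :=
    hhi.bdd_smul 1 hw.aestronglyMeasurable (ae_of_all _ hw1)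
  have hpull := condExp_bilin_of_stronglyMeasurable_left (μ := P) (m := m)
    (ContinuousLinearMap.lsmul ℝ ℝ (E := ℂ)).flip hh (g := w) (by simpa using hhw) hwi
  simp only [ContinuousLinearMap.flip_apply, ContinuousLinearMap.lsmul_apply] at hpull
  have e1 : ∫ ω, h ω * (w ω : ℂ) ∂P = ∫ ω, (P[w | m]) ω • h ω ∂P := by
    rw [← integral_congr_ae hpull, integral_condExp hm]
    refine integral_congr_ae (ae_of_all _ fun ω => ?_)
    simp [mul_comm]
  have hi2 : Integrable (fun ω => (P[w | m]) ω • h ω) P := integrable_condExp.congr hpull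
  have e2 : (∫ ω, h ω ∂P) * ((∫ ω, w ω ∂P : ℝ) : ℂ) = ∫ ω, (∫ x, w x ∂P) • h ω ∂P := by
    rw [integral_smul, Complex.real_smul, mul_comm]
  have hi3 : Integrable (fun ω => (∫ x, w x ∂P) • h ω) P :=
    hhi.smul (∫ x, w x ∂P)
  rw [e1, e2, ← integral_sub hi2 hi3, ← integral_const_mul]
  refine norm_integral_le_of_norm_le (hhi.norm.const_mul a) ?_
  filter_upwards [hc] with ω hω
  rw [← sub_smul, norm_smul]
  exact mul_le_mul_of_nonneg_right hω (norm_nonneg _)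

/-- Complex form of `norm_cov_le` for `e^{itT}`, by splitting into `cos (tT)` and `sin (tT)`. -/
lemma norm_cov_cexp_le {Ω : Type*} {m mΩ : MeasurableSpace Ω} (hm : m ≤ mΩ) (P : Measure Ω)
    [IsProbabilityMeasure P] {h : Ω → ℂ} {T : Ω → ℝ} (hh : StronglyMeasurable[m] h)
    (hhi : Integrable h P) (hT : Measurable T) (a t : ℝ)
    (hcos : ∀ᵐ ω ∂P, |(P[fun ω => Real.cos (t * T ω) | m]) ω -
      ∫ x, Real.cos (t * T x) ∂P| ≤ a)
    (hsin : ∀ᵐ ω ∂P, |(P[fun ω => Real.sin (t * T ω) | m]) ω -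
      ∫ x, Real.sin (t * T x) ∂P| ≤ a) :
    ‖∫ ω, h ω * Complex.exp (Complex.I * t * T ω) ∂P - (∫ ω, h ω ∂P) * charFn P T t‖ ≤
      2 * a * ∫ ω, ‖h ω‖ ∂P := by
  have mc : Measurable fun ω => Real.cos (t * T ω) := by fun_prop
  have ms : Measurable fun ω => Real.sin (t * T ω) := by fun_prop
  have h1 := norm_cov_le hm P hh hhi mc (fun ω => Real.abs_cos_le_one _) a hcos
  have h2 := norm_cov_le hm P hh hhi ms (fun ω => Real.abs_sin_le_one _) a hsin
  have hexp : ∀ ω, Complex.exp (Complex.I * t * T ω) =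
      (Real.cos (t * T ω) : ℂ) + (Real.sin (t * T ω) : ℂ) * Complex.I := fun ω => by
    rw [show Complex.I * t * T ω = ((t * T ω : ℝ) : ℂ) * Complex.I by push_cast; ring,
      Complex.exp_mul_I, Complex.ofReal_cos, Complex.ofReal_sin]
  have ic : Integrable (fun ω => (Real.cos (t * T ω) : ℂ)) P :=
    Integrable.ofReal (Integrable.of_bound mc.aestronglyMeasurable 1
      (ae_of_all _ fun ω => Real.abs_cos_le_one _))
  have is : Integrable (fun ω => (Real.sin (t * T ω) : ℂ)) P :=
    Integrable.ofReal (Integrable.of_bound ms.aestronglyMeasurable 1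
      (ae_of_all _ fun ω => Real.abs_sin_le_one _))
  have ihc : Integrable (fun ω => h ω * (Real.cos (t * T ω) : ℂ)) P :=
    hhi.mul_bdd (c := 1) ic.aestronglyMeasurable
      (ae_of_all _ fun ω => by
        rw [Complex.norm_real]; exact Real.abs_cos_le_one (t * T ω))
  have ihs : Integrable (fun ω => h ω * (Real.sin (t * T ω) : ℂ)) P :=
    hhi.mul_bdd (c := 1) is.aestronglyMeasurable
      (ae_of_all _ fun ω => by
        rw [Complex.norm_real]; exact Real.abs_sin_le_one (t * T ω))
  have e1 : ∫ ω, h ω * Complex.exp (Complex.I * t * T ω) ∂P =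
      ∫ ω, h ω * (Real.cos (t * T ω) : ℂ) ∂P +
        (∫ ω, h ω * (Real.sin (t * T ω) : ℂ) ∂P) * Complex.I := by
    rw [← integral_mul_const, ← integral_add ihc (ihs.mul_const _)]
    refine integral_congr_ae (ae_of_all _ fun ω => ?_)
    simp only [hexp]; ring
  have e2 : charFn P T t = ((∫ ω, Real.cos (t * T ω) ∂P : ℝ) : ℂ) +
      ((∫ ω, Real.sin (t * T ω) ∂P : ℝ) : ℂ) * Complex.I := by
    rw [charFn, ← integral_complex_ofReal, ← integral_complex_ofReal, ← integral_mul_const,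
      ← integral_add ic (is.mul_const _)]
    exact integral_congr_ae (ae_of_all _ fun ω => hexp ω)
  rw [e1, e2]
  have e3 : ∀ a b c d e : ℂ, a + b * Complex.I - e * (c + d * Complex.I) =
      (a - e * c) + (b - e * d) * Complex.I := fun a b c d e => by ring
  rw [e3]
  refine (norm_add_le _ _).trans ?_
  rw [norm_mul, Complex.norm_I, mul_one]
  linarith

/-! ### Tail sums and the one-step recursion -/

/-- The tail sum `y_k + ⋯ + y_n`; it is `0` for `k > n`. -/
def tailSum {Ω : Type*} (y : ℕ → Ω → ℝ) (n k : ℕ) (ω : Ω) : ℝ := ∑ i ∈ Finset.Icc k n, y i ω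

/-- The block of indices strictly between `k` and `k + m`, cut off at `n`. -/
def gap (n m k : ℕ) : Finset ℕ := (Finset.Icc (k + 1) n).filter (· < k + m)

lemma tailSum_succ_eq {Ω : Type*} (y : ℕ → Ω → ℝ) (n m k : ℕ) (hm : 1 ≤ m) (ω : Ω) :
    tailSum y n (k + 1) ω = ∑ i ∈ gap n m k, y i ω + tailSum y n (k + m) ω := by
  have h : Finset.Icc (k + m) n = (Finset.Icc (k + 1) n).filter (fun i => ¬ i < k + m) := by
    ext i; simp only [Finset.mem_Icc, Finset.mem_filter]; omega
  rw [tailSum, tailSum, gap, h, Finset.sum_filter_add_sum_filter_not]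

lemma card_gap_le (n m k : ℕ) : (gap n m k).card ≤ m := by
  have h : gap n m k ⊆ Finset.Ico k (k + m) := fun i hi => by
    simp only [gap, Finset.mem_filter, Finset.mem_Icc, Finset.mem_Ico] at hi ⊢; omega
  simpa using Finset.card_le_card h

/-- One step of the recursion for the characteristic functions of the tail sums:
`E e^{itT_k} ≈ φ_k(t) E e^{itT_{k+1}}`. The block between `k` and `k + m` is removed, the
remaining tail is decoupled from `y k` by mixing, and the block is put back. -/
lemma norm_charFn_tailSum_step {Ω : Type*} {m' mΩ : MeasurableSpace Ω} (P : Measure Ω)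
    [IsProbabilityMeasure P] (hm' : m' ≤ mΩ) (y : ℕ → Ω → ℝ)
    (n m k : ℕ) (c a t : ℝ) (ht : 0 ≤ t) (hc : 0 ≤ c) (ha : 0 ≤ a)
    (hm : 1 ≤ m) (hk : k ∈ Finset.Icc 1 n)
    (hyi : ∀ j, Integrable (y j) P) (hym : ∀ j, Measurable (y j))
    (hyk : StronglyMeasurable[m'] (y k))
    (h1a : ∀ j ∈ Finset.Icc 1 n, P.real {ω | y j ω ≠ 0} ≤ c)
    (h1b : ∫ ω, |y k ω| ∂P ≤ c)
    (h1c : ∀ i ∈ Finset.Icc 1 n, i ≠ k →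
      ∫ ω, |y k ω| * Set.indicator {ω' | y i ω' ≠ 0} 1 ω ∂P ≤ c ^ 2)
    (hcos : ∀ᵐ ω ∂P, |(P[fun ω => Real.cos (t * tailSum y n (k + m) ω) | m']) ω -
      ∫ x, Real.cos (t * tailSum y n (k + m) x) ∂P| ≤ a)
    (hsin : ∀ᵐ ω ∂P, |(P[fun ω => Real.sin (t * tailSum y n (k + m) ω) | m']) ω -
      ∫ x, Real.sin (t * tailSum y n (k + m) x) ∂P| ≤ a) :
    ‖charFn P (tailSum y n k) t - charFn P (y k) t * charFn P (tailSum y n (k + 1)) t‖ ≤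
      t * (2 * a * c + 4 * m * c ^ 2) := by
  have hTm : ∀ k, Measurable (tailSum y n k) := fun k =>
    Finset.measurable_fun_sum _ fun i _ => hym i
  have hgap : ∀ i ∈ gap n m k, i ∈ Finset.Icc 1 n ∧ i ≠ k := fun i hi => by
    simp only [gap, Finset.mem_filter, Finset.mem_Icc] at hi ⊢; omega
  have hcard : ((gap n m k).card : ℝ) ≤ m := by exact_mod_cast card_gap_le n m k
  have hms : ∀ i, MeasurableSet {ω | y i ω ≠ 0} := fun i =>
    (measurableSet_eq_fun (hym i) measurable_const).compl
  set G : Ω → ℂ := fun ω => Complex.exp (Complex.I * t * y k ω) - 1 with hG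
  set E : ℕ → Ω → ℂ := fun j ω => Complex.exp (Complex.I * t * tailSum y n j ω) with hE
  have hGi : Integrable G P := (integrable_cexp_I P (hym k).aemeasurable t).sub (integrable_const _)
  have hEi : ∀ j, Integrable (E j) P := fun j => integrable_cexp_I P (hTm j).aemeasurable t
  have hGE : ∀ j, Integrable (fun ω => G ω * E j ω) P := fun j =>
    hGi.mul_bdd (c := 1) (hEi j).aestronglyMeasurable
      (ae_of_all _ fun ω => (norm_cexp_I t (tailSum y n j ω)).le)
  have hGm : StronglyMeasurable[m'] G := by
    have hcont : Continuous fun x : ℝ => Complex.exp (Complex.I * t * x) - 1 := by fun_prop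
    exact hcont.comp_stronglyMeasurable hyk
  have hGint : ∫ ω, ‖G ω‖ ∂P ≤ t * c :=
    (integral_norm_cexp_I_sub_one_le P (hyi k) t ht).trans (mul_le_mul_of_nonneg_left h1b ht)
  have hGe : ∫ ω, G ω ∂P = charFn P (y k) t - 1 := (charFn_sub_one P (hym k).aemeasurable t).symm
  have hfk : charFn P (tailSum y n k) t =
      ∫ ω, G ω * E (k + 1) ω ∂P + charFn P (tailSum y n (k + 1)) t := by
    rw [charFn, charFn, ← integral_add (hGE _) (hEi _)]
    refine integral_congr_ae (ae_of_all _ fun ω => ?_)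
    have hs : tailSum y n k ω = y k ω + tailSum y n (k + 1) ω := by
      rw [tailSum, tailSum, ← Finset.add_sum_Ioc_eq_sum_Icc (Finset.mem_Icc.1 hk).2,
        Finset.Icc_add_one_left_eq_Ioc]
    simp only [hG, hE, hs]
    rw [Complex.ofReal_add, mul_add, Complex.exp_add]
    ring
  -- pointwise cost of removing the block
  have hblock : ∀ ω, ‖E (k + 1) ω - E (k + m) ω‖ ≤
      2 * ∑ i ∈ gap n m k, Set.indicator {ω' | y i ω' ≠ 0} 1 ω := fun ω => by
    have h := norm_cexp_block_le (gap n m k) (fun i => y i ω) (tailSum y n (k + m) ω) t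
    rw [← tailSum_succ_eq y n m k hm ω] at h
    exact h
  have hind : ∀ i, Integrable (Set.indicator {ω' | y i ω' ≠ 0} (1 : Ω → ℝ)) P := fun i =>
    (integrable_const (1 : ℝ)).indicator (hms i)
  have hyind : ∀ i, Integrable (fun ω => |y k ω| * Set.indicator {ω' | y i ω' ≠ 0} 1 ω) P :=
    fun i => (hyi k).abs.mul_bdd (c := 1) (hind i).aestronglyMeasurable
      (ae_of_all _ fun ω => by
        by_cases h : y i ω = 0 <;> simp [h])
  have hb1 : ‖∫ ω, G ω * (E (k + 1) ω - E (k + m) ω) ∂P‖ ≤ t * (2 * m * c ^ 2) := by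
    have hle : ‖∫ ω, G ω * (E (k + 1) ω - E (k + m) ω) ∂P‖ ≤
        ∫ ω, 2 * t * ∑ i ∈ gap n m k, |y k ω| * Set.indicator {ω' | y i ω' ≠ 0} 1 ω ∂P := by
      refine norm_integral_le_of_norm_le
        ((integrable_finsetSum _ fun i _ => hyind i).const_mul _) (ae_of_all _ fun ω => ?_)
      rw [norm_mul, ← Finset.mul_sum]
      refine (mul_le_mul (norm_cexp_I_sub_one_le t (y k ω) ht) (hblock ω) (norm_nonneg _)
        (by positivity)).trans (le_of_eq (by ring))
    rw [integral_const_mul, integral_finsetSum _ fun i _ => hyind i] at hle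
    have hs := Finset.sum_le_card_nsmul (gap n m k) _ (c ^ 2)
      fun i hi => h1c i (hgap i hi).1 (hgap i hi).2
    rw [nsmul_eq_mul] at hs
    have hs2 := hs.trans (mul_le_mul_of_nonneg_right hcard (sq_nonneg c))
    refine hle.trans ((mul_le_mul_of_nonneg_left hs2 (by positivity)).trans (le_of_eq (by ring)))
  have hb2 : ‖charFn P (tailSum y n (k + m)) t - charFn P (tailSum y n (k + 1)) t‖ ≤
      2 * m * c := by
    rw [norm_sub_rev, charFn, charFn, ← integral_sub (hEi _) (hEi _)]
    have hle : ‖∫ ω, (E (k + 1) ω - E (k + m) ω) ∂P‖ ≤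
        ∫ ω, 2 * ∑ i ∈ gap n m k, Set.indicator {ω' | y i ω' ≠ 0} 1 ω ∂P :=
      norm_integral_le_of_norm_le
        ((integrable_finsetSum _ fun i _ => hind i).const_mul _) (ae_of_all _ hblock)
    rw [integral_const_mul, integral_finsetSum _ fun i _ => hind i] at hle
    have hs := Finset.sum_le_card_nsmul (gap n m k)
      (fun i => ∫ ω, Set.indicator {ω' | y i ω' ≠ 0} (1 : Ω → ℝ) ω ∂P) c
      fun i hi => by
        rw [integral_indicator_one (hms i)]
        exact h1a i (hgap i hi).1
    rw [nsmul_eq_mul] at hs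
    have hs2 := hs.trans (mul_le_mul_of_nonneg_right hcard hc)
    linarith
  have hb3 := norm_cov_cexp_le hm' P hGm hGi (hTm (k + m)) a t hcos hsin
  have hb3' : ‖∫ ω, G ω * E (k + m) ω ∂P - (∫ ω, G ω ∂P) * charFn P (tailSum y n (k + m)) t‖ ≤
      2 * a * (t * c) := hb3.trans (mul_le_mul_of_nonneg_left hGint (by positivity))
  have hb4 : ‖charFn P (y k) t - 1‖ ≤ t * c :=
    (norm_charFn_sub_one_le P (hyi k) t ht).trans (mul_le_mul_of_nonneg_left h1b ht)
  have hb5 := mul_le_mul hb4 hb2 (norm_nonneg _) (by positivity)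
  rw [← norm_mul] at hb5
  have hsplit : ∫ ω, G ω * (E (k + 1) ω - E (k + m) ω) ∂P =
      ∫ ω, G ω * E (k + 1) ω ∂P - ∫ ω, G ω * E (k + m) ω ∂P := by
    rw [← integral_sub (hGE _) (hGE _)]
    simp only [mul_sub]
  have hdecomp : charFn P (tailSum y n k) t - charFn P (y k) t * charFn P (tailSum y n (k + 1)) t =
      ∫ ω, G ω * (E (k + 1) ω - E (k + m) ω) ∂P +
      (∫ ω, G ω * E (k + m) ω ∂P - (∫ ω, G ω ∂P) * charFn P (tailSum y n (k + m)) t) +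
      (charFn P (y k) t - 1) *
        (charFn P (tailSum y n (k + m)) t - charFn P (tailSum y n (k + 1)) t) := by
    rw [hsplit, hfk, hGe]; ring
  rw [hdecomp]
  refine (norm_add₃_le).trans ?_
  linarith

/-! ### The comparison with the compound Poisson law -/

/-- **Bound (1.8).** Under assumptions (A1)-(A4) on the triangular array, for every integer `m`
with `ℓ ≤ m ≤ n` and every `t ≥ 0`,
`|ψ t - ψ_n t| ≤ e^{2μ} (C2 / n + 3 C1 α m + 8 C1² m / n) t`, where
`ψ t = exp (μ (φ t - 1))` and `ψ_n` is the characteristic function of `S_n`. -/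
theorem charFun_difference_bound
    {Ω : Type*} {mΩ : MeasurableSpace Ω} (P : Measure Ω) [IsProbabilityMeasure P]
    (ℱ : Filtration ℕ mΩ)
    (Y : ℕ → ℕ → Ω → ℝ)
    (hYint : ∀ n j, Integrable (Y n j) P)
    (hYadp : ∀ n j, StronglyMeasurable[ℱ j] (Y n j))
    {Ω' : Type*} {mΩ' : MeasurableSpace Ω'} (P' : Measure Ω') [IsProbabilityMeasure P']
    (ξ : Ω' → ℝ) (hξmeas : Measurable ξ) (hξint : Integrable ξ P')
    (C1 : ℝ) (hC1 : 0 < C1)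
    -- assumption (A1)
    (hA1a : ∀ n, 1 ≤ n → ∀ j ∈ Finset.Icc 1 n,
      P {ω | Y n j ω ≠ 0} ≤ ENNReal.ofReal (C1 / n))
    (hA1b : ∀ n, 1 ≤ n → ∀ j ∈ Finset.Icc 1 n, ∫ ω, |Y n j ω| ∂P ≤ C1 / n)
    (hA1c : ∀ n, 1 ≤ n → ∀ i ∈ Finset.Icc 1 n, ∀ j ∈ Finset.Icc 1 n, i ≠ j →
      ∫ ω, |Y n j ω| * Set.indicator {ω' | Y n i ω' ≠ 0} 1 ω ∂P ≤ (C1 / n) ^ 2)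
    -- assumption (A2)
    (ℓ : ℕ) (hℓ : 1 ≤ ℓ)
    (α : ℕ → ℝ) (hα0 : ∀ k, 0 ≤ α k) (hαdec : Antitone α)
    (hαlim : Tendsto α atTop (nhds 0))
    (hA2 : ∀ n, 1 ≤ n → ∀ i j, j ∈ Finset.Icc 1 n → i + ℓ ≤ j →
      ∀ᵐ ω ∂P, |(P[Y n j | ℱ i]) ω - ∫ x, Y n j x ∂P| ≤ C1 / n * α (j - i))
    -- assumption (A3)
    (hA3 : ∀ n, 1 ≤ n → ∀ i j, j ∈ Finset.Icc 1 n → i < j →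
      ∀ v : (Fin (n - j + 1) → ℝ) → ℝ, Measurable v → (∀ x, |v x| ≤ 1) →
      ∀ᵐ ω ∂P, |(P[(fun ω' => v fun i' => Y n (j + (i' : ℕ)) ω') | ℱ i]) ω -
        ∫ ω', v (fun i' => Y n (j + (i' : ℕ)) ω') ∂P| ≤ α (j - i))
    -- assumption (A4)
    (C2 μ : ℝ) (hC2 : 0 < C2) (hμ : 0 < μ)
    (hA4 : ∀ n, 1 ≤ n → ∀ j ∈ Finset.Icc 1 n, ∀ t : ℝ,
      ‖deriv (charFn P (Y n j)) t - (n : ℂ)⁻¹ * (μ : ℂ) * deriv (charFn P' ξ) t‖ ≤ C2 / n ^ 2) :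
    ∀ n : ℕ, 1 ≤ n → ∀ m : ℕ, ℓ ≤ m → m ≤ n → ∀ t : ℝ, 0 ≤ t →
      ‖Complex.exp ((μ : ℂ) * (charFn P' ξ t - 1)) -
          charFn P (fun ω => ∑ j ∈ Finset.Icc 1 n, Y n j ω) t‖
        ≤ Real.exp (2 * μ) * (C2 / n + 3 * C1 * α m + 8 * C1 ^ 2 * m / n) * t := by
  intro n hn m hℓm hmn t ht
  have hm : 1 ≤ m := hℓ.trans hℓm
  have hn0 : (0 : ℝ) < n := by exact_mod_cast hn
  set c : ℝ := C1 / n with hc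
  have hc0 : 0 ≤ c := by positivity
  have hYm : ∀ j, Measurable (Y n j) := fun j => ((hYadp n j).mono (ℱ.le j)).measurable
  have h1a : ∀ j ∈ Finset.Icc 1 n, P.real {ω | Y n j ω ≠ 0} ≤ c := fun j hj =>
    ENNReal.toReal_le_of_le_ofReal hc0 (hA1a n hn j hj)
  -- the mixing assumption for a bounded function of the tail sum; beyond `n` the tail is constant
  have hmix : ∀ g : ℝ → ℝ, Measurable g → (∀ x, |g x| ≤ 1) → ∀ k ∈ Finset.Icc 1 n,
      ∀ᵐ ω ∂P, |(P[fun ω => g (tailSum (Y n) n (k + m) ω) | ℱ k]) ω -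
        ∫ x, g (tailSum (Y n) n (k + m) x) ∂P| ≤ α m := by
    intro g hg hg1 k hk
    by_cases hkm : k + m ≤ n
    · have h := hA3 n hn k (k + m) (Finset.mem_Icc.2 ⟨by omega, hkm⟩) (by omega)
        (fun x => g (∑ i, x i)) (by fun_prop) (fun x => hg1 _)
      have hs : ∀ ω, ∑ i : Fin (n - (k + m) + 1), Y n (k + m + (i : ℕ)) ω =
          tailSum (Y n) n (k + m) ω := fun ω => by
        rw [Fin.sum_univ_eq_sum_range (fun i => Y n (k + m + i) ω), tailSum,
          ← Finset.Ico_add_one_right_eq_Icc, Finset.sum_Ico_eq_sum_range]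
        congr 2; omega
      simp only [hs, Nat.add_sub_cancel_left] at h
      exact h
    · have hs : ∀ ω, tailSum (Y n) n (k + m) ω = 0 := fun ω => by
        rw [tailSum, Finset.Icc_eq_empty (by omega), Finset.sum_empty]
      simp only [hs, condExp_const (ℱ.le k)]
      simpa using hα0 m
  have hstep : ∀ k ∈ Finset.Icc 1 n,
      ‖charFn P (tailSum (Y n) n k) t -
        charFn P (Y n k) t * charFn P (tailSum (Y n) n (k + 1)) t‖ ≤
      t * (2 * α m * c + 4 * m * c ^ 2) := fun k hk =>
    norm_charFn_tailSum_step P (ℱ.le k) (Y n) n m k c (α m) t ht hc0 (hα0 m) hm hk (hYint n) hYm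
      (hYadp n k) h1a (hA1b n hn k hk) (fun i hi hik => hA1c n hn i hi k hk hik)
      (hmix (fun x => Real.cos (t * x)) (by fun_prop) (fun x => Real.abs_cos_le_one _) k hk)
      (hmix (fun x => Real.sin (t * x)) (by fun_prop) (fun x => Real.abs_sin_le_one _) k hk)
  have hre : ∀ z : ℂ, ‖z‖ ≤ 1 → (z - 1).re ≤ 0 := fun z hz => by
    have := (Complex.re_le_norm z).trans hz
    simpa using this
  -- replace the multiplier `φ_k` by `exp (φ_k - 1)`
  have hstep' : ∀ k ∈ Finset.Icc 1 n,
      ‖charFn P (tailSum (Y n) n k) t -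
        Complex.exp (charFn P (Y n k) t - 1) * charFn P (tailSum (Y n) n (k + 1)) t‖ ≤
      t * (2 * α m * c + 4 * m * c ^ 2) + 2 * t * c ^ 2 := by
    intro k hk
    have h1 := norm_cexp_sub_one_sub_le (hre _ (norm_charFn_le_one P (Y n k) t))
    have h2 : ‖charFn P (Y n k) t - 1‖ ≤ t * c :=
      (norm_charFn_sub_one_le P (hYint n k) t ht).trans
        (mul_le_mul_of_nonneg_left (hA1b n hn k hk) ht)
    have h3 : ‖charFn P (Y n k) t - 1‖ ≤ 2 * c :=
      (norm_charFn_sub_one_le_measure P (hYm k) t).trans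
        (mul_le_mul_of_nonneg_left (h1a k hk) zero_le_two)
    have h4 := mul_le_mul h2 h3 (norm_nonneg _) (by positivity)
    rw [← sq] at h4
    have h5 : ‖(Complex.exp (charFn P (Y n k) t - 1) - (1 + (charFn P (Y n k) t - 1))) *
        charFn P (tailSum (Y n) n (k + 1)) t‖ ≤ 2 * t * c ^ 2 := by
      rw [norm_mul]
      have := mul_le_mul (h1.trans h4) (norm_charFn_le_one P (tailSum (Y n) n (k + 1)) t)
        (norm_nonneg _) (by positivity)
      linarith
    have h6 := norm_sub_le_of_le (hstep k hk) h5
    refine le_trans (le_of_eq ?_) h6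
    congr 1; ring
  have hprod := norm_sub_prod_le (fun k => charFn P (tailSum (Y n) n k) t)
    (fun k => Complex.exp (charFn P (Y n k) t - 1)) _ n
    (fun k _ => norm_cexp_le_one_of_re (hre _ (norm_charFn_le_one P (Y n k) t))) hstep'
  have hlast : charFn P (tailSum (Y n) n (n + 1)) t = 1 := by
    have hs : ∀ ω, tailSum (Y n) n (n + 1) ω = 0 := fun ω => by
      rw [tailSum, Finset.Icc_eq_empty (by omega), Finset.sum_empty]
    simp [charFn, hs]
  have hfirst : charFn P (fun ω => ∑ j ∈ Finset.Icc 1 n, Y n j ω) t =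
      charFn P (tailSum (Y n) n 1) t := rfl
  simp only [hlast, mul_one, ← Complex.exp_sum] at hprod
  rw [← hfirst] at hprod
  -- integrate the derivative bound from `0` to `t`
  have hchar0 : ∀ k, charFn P (Y n k) 0 = 1 := fun k => by simp [charFn]
  have hchar0' : charFn P' ξ 0 = 1 := by simp [charFn]
  have hint : ∀ k ∈ Finset.Icc 1 n,
      ‖(charFn P (Y n k) t - 1) - (n : ℂ)⁻¹ * (μ : ℂ) * (charFn P' ξ t - 1)‖ ≤
        C2 / n ^ 2 * t := by
    intro k hk
    have hd1 := differentiable_charFn P (hYint n k)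
    have hd2 := differentiable_charFn P' hξint
    have h := convex_univ.norm_image_sub_le_of_norm_hasDerivWithin_le (𝕜 := ℝ) (s := Set.univ)
      (f := fun s => charFn P (Y n k) s - (n : ℂ)⁻¹ * (μ : ℂ) * charFn P' ξ s)
      (fun s _ => ((hd1 s).hasDerivAt.sub
        ((hd2 s).hasDerivAt.const_mul ((n : ℂ)⁻¹ * (μ : ℂ)))).hasDerivWithinAt)
      (fun s _ => hA4 n hn k hk s) (Set.mem_univ (0 : ℝ)) (Set.mem_univ t)
    simp only [hchar0, hchar0', sub_zero, Real.norm_of_nonneg ht] at h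
    refine le_trans (le_of_eq ?_) h
    congr 1; ring
  have hexps : ‖(μ : ℂ) * (charFn P' ξ t - 1) - ∑ k ∈ Finset.Icc 1 n, (charFn P (Y n k) t - 1)‖ ≤
      C2 / n * t := by
    have hn' : (n : ℂ) ≠ 0 := by exact_mod_cast hn0.ne'
    have hconst : (μ : ℂ) * (charFn P' ξ t - 1) =
        ∑ k ∈ Finset.Icc 1 n, (n : ℂ)⁻¹ * (μ : ℂ) * (charFn P' ξ t - 1) := by
      rw [Finset.sum_const, Nat.card_Icc, Nat.add_sub_cancel, nsmul_eq_mul]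
      field_simp
    rw [hconst, norm_sub_rev, ← Finset.sum_sub_distrib]
    refine (norm_sum_le_of_le _ hint).trans (le_of_eq ?_)
    rw [Finset.sum_const, Nat.card_Icc, Nat.add_sub_cancel, nsmul_eq_mul]
    field_simp
  have hexp := (norm_cexp_sub_cexp_le (z := (μ : ℂ) * (charFn P' ξ t - 1))
    (w := ∑ k ∈ Finset.Icc 1 n, (charFn P (Y n k) t - 1))
    (by
      rw [Complex.re_ofReal_mul]
      exact mul_nonpos_of_nonneg_of_nonpos hμ.le (hre _ (norm_charFn_le_one P' ξ t)))
    (by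
      rw [Complex.re_sum]
      exact Finset.sum_nonpos fun k _ => hre _ (norm_charFn_le_one P (Y n k) t))).trans hexps
  rw [norm_sub_rev] at hprod
  have htot := norm_sub_le_norm_sub_add_norm_sub
    (Complex.exp ((μ : ℂ) * (charFn P' ξ t - 1)))
    (Complex.exp (∑ k ∈ Finset.Icc 1 n, (charFn P (Y n k) t - 1)))
    (charFn P (fun ω => ∑ j ∈ Finset.Icc 1 n, Y n j ω) t)
  have hm1 : (1 : ℝ) ≤ m := by exact_mod_cast hm
  have hK : 0 ≤ (C2 / n + 3 * C1 * α m + 8 * C1 ^ 2 * m / n) * t := by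
    have := hα0 m
    positivity
  have hbound : C2 / n * t + n * (t * (2 * α m * c + 4 * m * c ^ 2) + 2 * t * c ^ 2) ≤
      (C2 / n + 3 * C1 * α m + 8 * C1 ^ 2 * m / n) * t := by
    have e1 : (n : ℝ) * (t * (2 * α m * c + 4 * m * c ^ 2) + 2 * t * c ^ 2) =
        2 * (C1 * α m * t) + 4 * (m * (C1 ^ 2 / n * t)) + 2 * (C1 ^ 2 / n * t) := by
      rw [hc]; field_simp
    have e2 : (C2 / n + 3 * C1 * α m + 8 * C1 ^ 2 * m / n) * t =
        C2 / n * t + 3 * (C1 * α m * t) + 8 * (m * (C1 ^ 2 / n * t)) := by ring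
    have p1 : 0 ≤ C1 * α m * t := mul_nonneg (mul_nonneg hC1.le (hα0 m)) ht
    have p2 : 0 ≤ C1 ^ 2 / n * t := by positivity
    have p3 := mul_le_mul_of_nonneg_right hm1 p2
    rw [e1, e2]
    linarith
  refine (htot.trans (add_le_add hexp hprod)).trans (hbound.trans ?_)
  rw [mul_assoc (Real.exp (2 * μ))]
  exact le_mul_of_one_le_left hK (Real.one_le_exp (by positivity))
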